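/- A function f : (0,∞) → ℝ is operator convex if and only if its transpose f̃ : (0,∞) → ℝ, defined by f̃(x) := x · f(1/x), is operator convex. -/

import Mathlib

open Matrix
open scoped ComplexOrder

/-- `f : (0,∞) → ℝ` is operator convex: for every size `m`, positive definite
`A B : M_m(ℂ)` and `t ∈ [0,1]`, `f(tA + (1-t)B) ≤ t f(A) + (1-t) f(B)` in the
Loewner order (`f` applied by the spectral functional calculus; only the values of
`f` on `(0,∞)` are involved since positive definite matrices have positive eigenvalues). -/
def OperatorConvexOn (f : ℝ → ℝ) : Prop :=
  ∀ (m : ℕ) (A B : Matrix (Fin m) (Fin m) ℂ), A.PosDef → B.PosDef →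
    ∀ t : ℝ, 0 ≤ t → t ≤ 1 →
      (t • cfc f A + (1 - t) • cfc f B - cfc f (t • A + (1 - t) • B)).PosSemidef

/-!
Operator convexity implies the Hansen–Pedersen form of Jensen's inequality,
`f(V*AV + W*BW) ≤ V* f(A) V + W* f(B) W` whenever `V*V + W*W = 1`. Given positive definite `X`, `Y`
and `S = tX + (1-t)Y`, apply it to `A = X⁻¹`, `B = Y⁻¹`, `V = √t X^{1/2} S^{-1/2}` and
`W = √(1-t) Y^{1/2} S^{-1/2}`, for which `V*AV + W*BW = S⁻¹`. Conjugating the result by `S^{1/2}`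
gives convexity of `f̃`, because `f̃(X) = X^{1/2} f(X⁻¹) X^{1/2}`. The converse follows since the
transpose is an involution on functions on `(0,∞)`.
-/

open scoped MatrixOrder

section FunctionalCalculus

variable {𝕜 m n : Type*} [RCLike 𝕜] [Fintype m] [DecidableEq m] [Fintype n] [DecidableEq n]

theorem aeval_mul_eq_mul_aeval_of_mul_eq_mul {R α : Type*} [CommSemiring R] [CommSemiring α]
    [Algebra R α] {A : Matrix m m α} {B : Matrix n n α} {V : Matrix m n α} (h : A * V = V * B)
    (p : Polynomial R) : Polynomial.aeval A p * V = V * Polynomial.aeval B p := by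
  have pow_mul_eq (k : ℕ) : A ^ k * V = V * B ^ k := by
    induction k with
    | zero => simp
    | succ k ih =>
      rw [pow_succ, Matrix.mul_assoc, h, ← Matrix.mul_assoc, ih, Matrix.mul_assoc, ← pow_succ]
  induction p using Polynomial.induction_on' with
  | add p q hp hq => simp [Matrix.add_mul, Matrix.mul_add, hp, hq]
  | monomial k a => simp [← Algebra.smul_def, pow_mul_eq]

theorem cfc_mul_eq_mul_cfc_of_mul_eq_mul (f : ℝ → ℝ) {A : Matrix m m 𝕜} {B : Matrix n n 𝕜}
    (hA : A.IsHermitian) (hB : B.IsHermitian) {V : Matrix m n 𝕜} (h : A * V = V * B) :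
    cfc f A * V = V * cfc f B := by
  -- The spectra are finite, so `f` agrees with a single polynomial on both of them.
  have hfin : (spectrum ℝ A ∪ spectrum ℝ B).Finite :=
    A.finite_real_spectrum.union B.finite_real_spectrum
  obtain ⟨p, hp⟩ : ∃ p : Polynomial ℝ, ∀ x ∈ spectrum ℝ A ∪ spectrum ℝ B, f x = p.eval x :=
    ⟨Lagrange.interpolate hfin.toFinset id f, fun x hx =>
      (Lagrange.eval_interpolate_at_node (v := id) f (Set.injOn_id _) (by simpa using hx)).symm⟩
  rw [cfc_congr fun x hx => hp x (.inl hx), cfc_congr fun x hx => hp x (.inr hx),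
    cfc_polynomial p A hA.isSelfAdjoint, cfc_polynomial p B hB.isSelfAdjoint]
  exact aeval_mul_eq_mul_aeval_of_mul_eq_mul h p

theorem cfc_mul_mul_conjTranspose (f : ℝ → ℝ) {A : Matrix n n 𝕜} (hA : A.IsHermitian)
    {U : Matrix m n 𝕜} (hU : Uᴴ * U = 1) (hU' : U * Uᴴ = 1) :
    cfc f (U * A * Uᴴ) = U * cfc f A * Uᴴ := by
  have intertwine : U * A * Uᴴ * U = U * A := by rw [Matrix.mul_assoc, hU, Matrix.mul_one]
  have h := cfc_mul_eq_mul_cfc_of_mul_eq_mul f (isHermitian_mul_mul_conjTranspose U hA) hA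
    intertwine
  rw [← h, Matrix.mul_assoc (cfc f _), hU', Matrix.mul_one]

theorem cfc_submatrix_equiv (f : ℝ → ℝ) {A : Matrix n n 𝕜} (hA : A.IsHermitian) (e : m ≃ n) :
    cfc f (A.submatrix e e) = (cfc f A).submatrix e e := by
  let U : Matrix m n 𝕜 := (1 : Matrix n n 𝕜).submatrix e id
  have submatrix_eq (M : Matrix n n 𝕜) : M.submatrix e e = U * M * Uᴴ := by
    ext i j
    simp [U, Matrix.mul_apply, Matrix.one_apply]
  have hU' : U * Uᴴ = 1 := by simpa using (submatrix_eq 1).symm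
  have hU : Uᴴ * U = 1 := by
    simp only [U, conjTranspose_submatrix, conjTranspose_one, submatrix_mul_equiv, Matrix.one_mul,
      submatrix_id_id]
  rw [submatrix_eq, submatrix_eq, cfc_mul_mul_conjTranspose f hA hU hU']

theorem cfc_fromBlocks_zero_zero (f : ℝ → ℝ) {A : Matrix m m 𝕜} {B : Matrix n n 𝕜}
    (hA : A.IsHermitian) (hB : B.IsHermitian) :
    cfc f (fromBlocks A 0 0 B) = fromBlocks (cfc f A) 0 0 (cfc f B) := by
  have hAB : (fromBlocks A 0 0 B).IsHermitian := hA.fromBlocks (by simp) hB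
  have left_cols : cfc f (fromBlocks A 0 0 B) * (fromRows 1 0 : Matrix (m ⊕ n) m 𝕜) =
      (fromRows 1 0 : Matrix (m ⊕ n) m 𝕜) * cfc f A :=
    cfc_mul_eq_mul_cfc_of_mul_eq_mul f hAB hA (by
      simp [← fromRows_fromCols_eq_fromBlocks, fromRows_mul, fromCols_mul_fromRows])
  have right_cols : cfc f (fromBlocks A 0 0 B) * (fromRows 0 1 : Matrix (m ⊕ n) n 𝕜) =
      (fromRows 0 1 : Matrix (m ⊕ n) n 𝕜) * cfc f B :=
    cfc_mul_eq_mul_cfc_of_mul_eq_mul f hAB hB (by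
      simp [← fromRows_fromCols_eq_fromBlocks, fromRows_mul, fromCols_mul_fromRows])
  calc cfc f (fromBlocks A 0 0 B)
      = cfc f (fromBlocks A 0 0 B) * fromCols (fromRows 1 0) (fromRows 0 1) := by
        rw [fromCols_fromRows_eq_fromBlocks, fromBlocks_one, Matrix.mul_one]
    _ = fromBlocks (cfc f A) 0 0 (cfc f B) := by
        rw [mul_fromCols, left_cols, right_cols, fromRows_mul, fromRows_mul,
          fromCols_fromRows_eq_fromBlocks]
        simp

end FunctionalCalculus

section PosDef

variable {𝕜 m n : Type*} [RCLike 𝕜]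

theorem posDef_convexComb {A B : Matrix n n 𝕜} (hA : A.PosDef) (hB : B.PosDef) {t : ℝ}
    (ht₀ : 0 ≤ t) (ht₁ : t ≤ 1) : (t • A + (1 - t) • B).PosDef := by
  rcases ht₀.eq_or_lt with rfl | ht₀
  · simpa using hB
  · exact (hA.smul ht₀).add_posSemidef (hB.posSemidef.smul (sub_nonneg.2 ht₁))

theorem posDef_fromBlocks_zero_zero [Finite m] [Finite n] {A : Matrix m m 𝕜} {B : Matrix n n 𝕜}
    (hA : A.PosDef) (hB : B.PosDef) : (fromBlocks A 0 0 B).PosDef := by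
  classical
  cases nonempty_fintype m
  cases nonempty_fintype n
  have : Invertible A := hA.isUnit.invertible
  have hAB : (fromBlocks A 0 0 B).PosSemidef := by
    simpa using (PosDef.fromBlocks₁₁ (0 : Matrix m n 𝕜) B hA).2 (by simpa using hB.posSemidef)
  rw [hAB.posDef_iff_det_ne_zero, det_fromBlocks_zero₂₁]
  exact mul_ne_zero hA.det_pos.ne' hB.det_pos.ne'

variable [Fintype n]

theorem conjTranspose_mul_mul_le [Finite m] {A B : Matrix n n 𝕜} (h : A ≤ B) (V : Matrix n m 𝕜) :
    Vᴴ * A * V ≤ Vᴴ * B * V := by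
  cases nonempty_fintype m
  rw [Matrix.le_iff, ← Matrix.sub_mul, ← Matrix.mul_sub]
  exact (Matrix.le_iff.1 h).conjTranspose_mul_mul_same V

variable [DecidableEq n]

theorem pos_of_mem_spectrum_of_posDef {A : Matrix n n 𝕜} (hA : A.PosDef) {x : ℝ}
    (hx : x ∈ spectrum ℝ A) : 0 < x :=
  hA.isStrictlyPositive.spectrum_pos hx

theorem conjTranspose_sqrt (A : Matrix n n 𝕜) : (CFC.sqrt A)ᴴ = CFC.sqrt A :=
  (CFC.sqrt_nonneg A).isSelfAdjoint.star_eq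

theorem sqrt_inv_mul_sqrt_of_posDef {A : Matrix n n 𝕜} (hA : A.PosDef) :
    CFC.sqrt A⁻¹ * CFC.sqrt A = 1 := by
  have hunit : IsUnit (CFC.sqrt A) := (CFC.isUnit_sqrt_iff A hA.posSemidef.nonneg).2 hA.isUnit
  rw [← hA.posSemidef.inv_sqrt, nonsing_inv_mul _ ((isUnit_iff_isUnit_det _).1 hunit)]

theorem sqrt_mul_inv_mul_sqrt_of_posDef {A : Matrix n n 𝕜} (hA : A.PosDef) :
    CFC.sqrt A * A⁻¹ * CFC.sqrt A = 1 := by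
  have inv_eq : A⁻¹ = CFC.sqrt A⁻¹ * CFC.sqrt A⁻¹ :=
    (CFC.sqrt_mul_sqrt_self A⁻¹ hA.inv.posSemidef.nonneg).symm
  rw [inv_eq, Matrix.mul_assoc, Matrix.mul_assoc, sqrt_inv_mul_sqrt_of_posDef hA,
    Matrix.mul_one, mul_eq_one_comm.1 (sqrt_inv_mul_sqrt_of_posDef hA)]

theorem cfc_inv_of_posDef (f : ℝ → ℝ) {A : Matrix n n 𝕜} (hA : A.PosDef) :
    cfc f A⁻¹ = cfc (fun x => f x⁻¹) A := by
  have hcont := (A.finite_real_spectrum.image (·⁻¹)).continuousOn f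
  simpa [coe_units_inv] using (cfc_comp_inv f hA.isUnit.unit hcont hA.1.isSelfAdjoint).symm

theorem cfc_self_mul_comp_inv_of_posDef (f : ℝ → ℝ) {A : Matrix n n 𝕜} (hA : A.PosDef) :
    cfc (fun x => x * f x⁻¹) A = CFC.sqrt A * cfc f A⁻¹ * CFC.sqrt A := by
  have hcont (g : ℝ → ℝ) : ContinuousOn g (spectrum ℝ A) := A.finite_real_spectrum.continuousOn g
  rw [CFC.sqrt_eq_real_sqrt A hA.posSemidef.nonneg, cfcₙ_eq_cfc, cfc_inv_of_posDef f hA,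
    ← cfc_mul _ _ A (hcont _) (hcont _), ← cfc_mul _ _ A (hcont _) (hcont _)]
  refine cfc_congr fun x hx => ?_
  rw [mul_right_comm, Real.mul_self_sqrt (pos_of_mem_spectrum_of_posDef hA hx).le]

end PosDef

section RangeReflection

variable {𝕜 m n : Type*} [RCLike 𝕜] [Fintype m] [DecidableEq n]

/-- For an isometry `V`, the self-adjoint unitary `2VV* - 1` fixing the range of `V` and negating
its orthogonal complement. Averaging `A` with its conjugate by this unitary yields a matrix for
which the range of `V` is reducing. -/
def rangeReflection (V : Matrix n m 𝕜) : Matrix n n 𝕜 := (2 : ℝ) • (V * Vᴴ) - 1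

theorem conjTranspose_rangeReflection (V : Matrix n m 𝕜) :
    (rangeReflection V)ᴴ = rangeReflection V := by
  simp [rangeReflection]

variable [DecidableEq m] [Fintype n] {V : Matrix n m 𝕜}

theorem rangeReflection_mul (hV : Vᴴ * V = 1) : rangeReflection V * V = V := by
  rw [rangeReflection, Matrix.sub_mul, Matrix.smul_mul, Matrix.mul_assoc, hV, Matrix.mul_one,
    Matrix.one_mul, two_smul, add_sub_cancel_right]

theorem rangeReflection_mul_self (hV : Vᴴ * V = 1) :
    rangeReflection V * rangeReflection V = 1 := by
  nth_rw 2 [rangeReflection]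
  rw [Matrix.mul_sub, Matrix.mul_smul, ← Matrix.mul_assoc, rangeReflection_mul hV, rangeReflection,
    Matrix.mul_one, sub_sub_cancel]

theorem average_rangeReflection_conj_mul (hV : Vᴴ * V = 1) (A : Matrix n n 𝕜) :
    ((1 / 2 : ℝ) • A + (1 - 1 / 2 : ℝ) • (rangeReflection V * A * (rangeReflection V)ᴴ)) * V =
      V * (Vᴴ * A * V) := by
  have conj_mul : rangeReflection V * A * (rangeReflection V)ᴴ * V =
      (2 : ℝ) • (V * (Vᴴ * A * V)) - A * V := by
    rw [conjTranspose_rangeReflection, Matrix.mul_assoc, rangeReflection_mul hV]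
    simp [rangeReflection, Matrix.sub_mul, Matrix.mul_assoc]
  rw [Matrix.add_mul, Matrix.smul_mul, Matrix.smul_mul, conj_mul]
  module

end RangeReflection

namespace OperatorConvexOn

variable {f : ℝ → ℝ} {m n p : Type*} [Fintype m] [DecidableEq m] [Fintype n] [DecidableEq n]
  [Fintype p] [DecidableEq p]

theorem congr {g : ℝ → ℝ} (hf : OperatorConvexOn f) (hfg : Set.EqOn f g (Set.Ioi 0)) :
    OperatorConvexOn g := by
  intro m A B hA hB t ht₀ ht₁
  have cfc_eq {M : Matrix (Fin m) (Fin m) ℂ} (hM : M.PosDef) : cfc g M = cfc f M :=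
    cfc_congr fun x hx => (hfg (pos_of_mem_spectrum_of_posDef hM hx)).symm
  rw [cfc_eq hA, cfc_eq hB, cfc_eq (posDef_convexComb hA hB ht₀ ht₁)]
  exact hf m A B hA hB t ht₀ ht₁

theorem cfc_convexComb_le (hf : OperatorConvexOn f) {A B : Matrix n n ℂ} (hA : A.PosDef)
    (hB : B.PosDef) {t : ℝ} (ht₀ : 0 ≤ t) (ht₁ : t ≤ 1) :
    cfc f (t • A + (1 - t) • B) ≤ t • cfc f A + (1 - t) • cfc f B := by
  let e := (Fintype.equivFin n).symm
  have h := hf _ (A.submatrix e e) (B.submatrix e e) (hA.submatrix e.injective)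
    (hB.submatrix e.injective) t ht₀ ht₁
  have comb_eq : t • A.submatrix e e + (1 - t) • B.submatrix e e =
      (t • A + (1 - t) • B).submatrix e e := rfl
  rw [comb_eq, cfc_submatrix_equiv f hA.1, cfc_submatrix_equiv f hB.1,
    cfc_submatrix_equiv f (posDef_convexComb hA hB ht₀ ht₁).1] at h
  exact Matrix.le_iff.2 ((posSemidef_submatrix_equiv e).1 h)

theorem cfc_conjTranspose_mul_mul_le (hf : OperatorConvexOn f) {A : Matrix n n ℂ} (hA : A.PosDef)
    {V : Matrix n m ℂ} (hV : Vᴴ * V = 1) : cfc f (Vᴴ * A * V) ≤ Vᴴ * cfc f A * V := by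
  let W := rangeReflection V
  let M := (1 / 2 : ℝ) • A + (1 - 1 / 2 : ℝ) • (W * A * Wᴴ)
  have hW : Wᴴ = W := conjTranspose_rangeReflection V
  have hWW : W * W = 1 := rangeReflection_mul_self hV
  have hWV : W * V = V := rangeReflection_mul hV
  have hVW : Vᴴ * W = Vᴴ := by simpa [hW] using congrArg conjTranspose hWV
  have hWA : (W * A * Wᴴ).PosDef :=
    (IsUnit.posDef_star_right_conjugate_iff (IsUnit.of_mul_eq_one W hWW)).2 hA
  have hM : M.PosDef := posDef_convexComb hA hWA (by norm_num) (by norm_num)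
  have cfc_M_mul : cfc f M * V = V * cfc f (Vᴴ * A * V) :=
    cfc_mul_eq_mul_cfc_of_mul_eq_mul f hM.1 (isHermitian_conjTranspose_mul_mul V hA.1)
      (average_rangeReflection_conj_mul hV A)
  have cfc_conj : Vᴴ * cfc f (W * A * Wᴴ) * V = Vᴴ * cfc f A * V := by
    rw [cfc_mul_mul_conjTranspose f hA.1 (by rw [hW, hWW]) (by rw [hW, hWW]), hW,
      Matrix.mul_assoc, Matrix.mul_assoc (W * _), hWV, Matrix.mul_assoc W, ← Matrix.mul_assoc Vᴴ W,
      hVW, Matrix.mul_assoc]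
  calc cfc f (Vᴴ * A * V)
      = Vᴴ * cfc f M * V := by
        rw [Matrix.mul_assoc _ (cfc f M), cfc_M_mul, ← Matrix.mul_assoc, hV, Matrix.one_mul]
    _ ≤ Vᴴ * ((1 / 2 : ℝ) • cfc f A + (1 - 1 / 2 : ℝ) • cfc f (W * A * Wᴴ)) * V :=
        conjTranspose_mul_mul_le (hf.cfc_convexComb_le hA hWA (by norm_num) (by norm_num)) V
    _ = Vᴴ * cfc f A * V := by
        rw [Matrix.mul_add, Matrix.add_mul, Matrix.mul_smul, Matrix.mul_smul, Matrix.smul_mul,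
          Matrix.smul_mul, cfc_conj]
        module

theorem cfc_add_conjTranspose_mul_mul_le (hf : OperatorConvexOn f) {A : Matrix n n ℂ}
    {B : Matrix p p ℂ} (hA : A.PosDef) (hB : B.PosDef) {V : Matrix n m ℂ} {W : Matrix p m ℂ}
    (hVW : Vᴴ * V + Wᴴ * W = 1) :
    cfc f (Vᴴ * A * V + Wᴴ * B * W) ≤ Vᴴ * cfc f A * V + Wᴴ * cfc f B * W := by
  have conj_blocks (M : Matrix n n ℂ) (N : Matrix p p ℂ) :
      (fromRows V W)ᴴ * fromBlocks M 0 0 N * fromRows V W = Vᴴ * M * V + Wᴴ * N * W := by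
    simp [conjTranspose_fromRows_eq_fromCols_conjTranspose, fromCols_mul_fromBlocks,
      fromCols_mul_fromRows]
  have hiso : (fromRows V W)ᴴ * fromRows V W = 1 := by
    rw [conjTranspose_fromRows_eq_fromCols_conjTranspose, fromCols_mul_fromRows, hVW]
  have h := hf.cfc_conjTranspose_mul_mul_le (posDef_fromBlocks_zero_zero hA hB) hiso
  rwa [cfc_fromBlocks_zero_zero f hA.1 hB.1, conj_blocks, conj_blocks] at h

theorem cfc_conjTranspose_mul_self_le (hf : OperatorConvexOn f) {X Y : Matrix n n ℂ}
    (hX : X.PosDef) (hY : Y.PosDef) {t : ℝ} (ht₀ : 0 ≤ t) (ht₁ : t ≤ 1) {K : Matrix n m ℂ}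
    (hK : Kᴴ * (t • X + (1 - t) • Y) * K = 1) :
    cfc f (Kᴴ * K) ≤ Kᴴ * (t • cfc (fun x => x * f x⁻¹) X +
      (1 - t) • cfc (fun x => x * f x⁻¹) Y) * K := by
  have conj_eq {s : ℝ} (hs : 0 ≤ s) (Z M : Matrix n n ℂ) :
      (√s • (CFC.sqrt Z * K))ᴴ * M * (√s • (CFC.sqrt Z * K)) =
        s • (Kᴴ * (CFC.sqrt Z * M * CFC.sqrt Z) * K) := by
    simp [conjTranspose_sqrt, smul_smul, Real.mul_self_sqrt hs, Matrix.mul_assoc]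
  have conj_one {s : ℝ} (hs : 0 ≤ s) {Z : Matrix n n ℂ} (hZ : Z.PosDef) :
      (√s • (CFC.sqrt Z * K))ᴴ * (√s • (CFC.sqrt Z * K)) = s • (Kᴴ * Z * K) := by
    simpa [CFC.sqrt_mul_sqrt_self Z hZ.posSemidef.nonneg] using conj_eq hs Z 1
  have ht₂ : 0 ≤ 1 - t := sub_nonneg.2 ht₁
  have h := hf.cfc_add_conjTranspose_mul_mul_le hX.inv hY.inv
    (V := √t • (CFC.sqrt X * K)) (W := √(1 - t) • (CFC.sqrt Y * K)) (by
      rw [conj_one ht₀ hX, conj_one ht₂ hY, ← hK]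
      simp [Matrix.mul_add, Matrix.add_mul])
  simp only [conj_eq ht₀, conj_eq ht₂, sqrt_mul_inv_mul_sqrt_of_posDef, hX, hY, Matrix.mul_one,
    ← cfc_self_mul_comp_inv_of_posDef, ← add_smul, add_sub_cancel, one_smul] at h
  simpa only [Matrix.mul_add, Matrix.add_mul, Matrix.mul_smul, Matrix.smul_mul] using h

theorem self_mul_comp_inv (hf : OperatorConvexOn f) : OperatorConvexOn (fun x => x * f x⁻¹) := by
  intro m X Y hX hY t ht₀ ht₁
  let S := t • X + (1 - t) • Y
  have hS : S.PosDef := posDef_convexComb hX hY ht₀ ht₁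
  have sqrt_inv_mul_sqrt : CFC.sqrt S⁻¹ * CFC.sqrt S = 1 := sqrt_inv_mul_sqrt_of_posDef hS
  have sqrt_mul_sqrt_inv : CFC.sqrt S * CFC.sqrt S⁻¹ = 1 := mul_eq_one_comm.1 sqrt_inv_mul_sqrt
  have normalized : (CFC.sqrt S⁻¹)ᴴ * S * CFC.sqrt S⁻¹ = 1 := by
    rw [conjTranspose_sqrt, ← sqrt_mul_inv_mul_sqrt_of_posDef hS.inv,
      nonsing_inv_nonsing_inv _ ((isUnit_iff_isUnit_det S).1 hS.isUnit)]
  have h := conjTranspose_mul_mul_le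
    (hf.cfc_conjTranspose_mul_self_le hX hY ht₀ ht₁ normalized) (CFC.sqrt S)
  have cancel (F : Matrix (Fin m) (Fin m) ℂ) :
      CFC.sqrt S * (CFC.sqrt S⁻¹ * F * CFC.sqrt S⁻¹) * CFC.sqrt S = F := by
    rw [← Matrix.mul_assoc, ← Matrix.mul_assoc, sqrt_mul_sqrt_inv, Matrix.one_mul,
      Matrix.mul_assoc, sqrt_inv_mul_sqrt, Matrix.mul_one]
  rw [conjTranspose_sqrt, conjTranspose_sqrt, cancel,
    CFC.sqrt_mul_sqrt_self S⁻¹ hS.inv.posSemidef.nonneg,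
    ← cfc_self_mul_comp_inv_of_posDef f hS] at h
  exact Matrix.le_iff.1 h

end OperatorConvexOn

/-- `f` is operator convex on `(0,∞)` if and only if its transpose
`f̃(x) = x · f(1/x)` is operator convex on `(0,∞)`. -/
theorem stmt19 (f : ℝ → ℝ) :
    OperatorConvexOn f ↔ OperatorConvexOn (fun x => x * f x⁻¹) := by
  refine ⟨fun hf => hf.self_mul_comp_inv, fun hf => hf.self_mul_comp_inv.congr fun x hx => ?_⟩
  have hx₀ : x ≠ 0 := (Set.mem_Ioi.1 hx).ne'
  simp [hx₀]
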